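/- Let K be a field and let R = AddMonoidAlgebra K ℚ≥0, with its canonical ℚ-grading in which the component of degree q ∈ ℚ is the K-span of e_q = single q 1 if q ≥ 0 and is zero otherwise, and let 𝔪 be the ideal of R generated by { e_α | α > 0 }, a homogeneous ideal whose degree-q component is 𝔪 ∩ R_q. Then there exist a ℚ-graded R-module N (an R-module N with a grading 𝒩 : ℚ → AddSubgroup N making it a ℚ-graded R-module) and an R-linear map f : 𝔪 →ₗ[R] N such that for NO finite subset S ⊆ ℚ does one have f(𝔪 ∩ R_q) ⊆ ∑_{s ∈ S} 𝒩 (q + s) for all q ∈ ℚ; that is, the canonical monomorphism HOM_ℚ(𝔪, N)_[0] → Hom_R(𝔪, N) is not surjective. -/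

import Mathlib

open scoped NNRat

/-- The canonical `ℚ`-grading of `R = K[ℚ≥0]`: the component of degree `q` is the
`K`-span of `e_q = single q 1` if `q ≥ 0`, and zero otherwise. -/
noncomputable def canonicalGrade (K : Type) [Field K] (q : ℚ) :
    AddSubgroup (AddMonoidAlgebra K ℚ≥0) :=
  if h : 0 ≤ q then
    (Submodule.span K {AddMonoidAlgebra.single (⟨q, h⟩ : ℚ≥0) (1 : K)}).toAddSubgroup
  else ⊥

/-!
In `K[ℕ × ℚ≥0] = K[ℚ≥0][t]`, with `t` of degree `1`, divide by the ideal of the monomials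
`t ^ n * e_α` with `n * α ≥ 1`. Each element of `𝔪` is then annihilated by some power of `t`, so
"multiplication by `1 / (1 - t)`", i.e. `x ↦ ∑ n, t ^ n * x`, is a well-defined `K[ℚ≥0]`-linear map
on `𝔪`. Its homogeneous part `x ↦ t ^ n * x` of degree `n` is nonzero for every `n`, because
`t ^ n * e_α` survives in the quotient for `α < 1 / n`.
-/

open AddMonoidAlgebra DirectSum Function

section LocallyFiniteSum

variable {R M N ι κ : Type*} [Semiring R] [AddCommMonoid M] [Module R M]

/-- The sum of a family of linear maps of which only finitely many are nonzero at each vector. -/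
noncomputable def locallyFiniteSum [AddCommMonoid N] [Module R N] (g : κ → M →ₗ[R] N)
    (hg : ∀ x, HasFiniteSupport fun k => g k x) : M →ₗ[R] N where
  toFun x := ∑ᶠ k, g k x
  map_add' x y := by simp only [map_add, finsum_add_distrib (hg x) (hg y)]
  map_smul' r x := by simp only [map_smul, RingHom.id_apply, smul_finsum' r (hg x)]

theorem eq_zero_of_finsum_mem_biSup [AddCommGroup N] {𝒩 : ι → AddSubgroup N}
    (h𝒩 : iSupIndep 𝒩) {d : κ → ι} (hd : Injective d) {y : κ → N} (hy : ∀ k, y k ∈ 𝒩 (d k))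
    (hfin : HasFiniteSupport y) {T : Set ι} (hT : ∑ᶠ k, y k ∈ ⨆ i ∈ T, 𝒩 i) {k : κ}
    (hk : d k ∉ T) : y k = 0 := by
  have hsum : ∑ᶠ l, y l ∈ ⨆ i ≠ d k, 𝒩 i :=
    (biSup_mono fun i hi (h : i = d k) => hk (h ▸ hi) : _ ≤ ⨆ i ≠ d k, 𝒩 i) hT
  have hrest : ∑ᶠ (l) (_ : l ≠ k), y l ∈ ⨆ i ≠ d k, 𝒩 i :=
    finsum_induction (· ∈ ⨆ i ≠ d k, 𝒩 i) (zero_mem _) (fun _ _ => add_mem) fun l =>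
      finsum_induction (· ∈ ⨆ i ≠ d k, 𝒩 i) (zero_mem _) (fun _ _ => add_mem) fun hl =>
        AddSubgroup.mem_iSup_of_mem (d l) (AddSubgroup.mem_iSup_of_mem (hd.ne hl) (hy l))
  have hk_mem : y k ∈ ⨆ i ≠ d k, 𝒩 i :=
    (add_mem_cancel_right hrest).1 (by rwa [add_finsum_cond_ne k hfin])
  exact (h𝒩 (d k)).le_bot ⟨hy k, hk_mem⟩

theorem locallyFiniteSum_not_finite_degree [AddCommGroup N] [Module R N] [Add ι]
    [IsLeftCancelAdd ι] [Infinite κ] {ℳ : ι → Set M} {𝒩 : ι → AddSubgroup N} (h𝒩 : iSupIndep 𝒩)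
    {d : κ → ι} (hd : Injective d) {g : κ → M →ₗ[R] N} (hg : ∀ x, HasFiniteSupport fun k => g k x)
    (hdeg : ∀ k q, ∀ x ∈ ℳ q, g k x ∈ 𝒩 (q + d k)) (hne : ∀ k, ∃ q, ∃ x ∈ ℳ q, g k x ≠ 0)
    (S : Finset ι) : ¬ ∀ q, ∀ x ∈ ℳ q, locallyFiniteSum g hg x ∈ ⨆ s ∈ S, 𝒩 (q + s) := by
  intro hS
  obtain ⟨k, hk⟩ := Infinite.exists_notMem_finset (S.preimage d hd.injOn)
  obtain ⟨q, x, hx, hgx⟩ := hne k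
  refine hgx (eq_zero_of_finsum_mem_biSup h𝒩 ((add_right_injective q).comp hd)
    (fun l => hdeg l q x hx) (hg x) (T := (q + ·) '' S) ?_ ?_)
  · rw [iSup_image]
    exact hS q x hx
  · rintro ⟨s, hs, hqs⟩
    exact hk (Finset.mem_preimage.2 (add_left_cancel hqs ▸ hs))

end LocallyFiniteSum

section GradedQuotient

variable {K ι M N : Type*} [DecidableEq ι] [Ring K] [AddCommGroup M] [Module K M]
  [AddCommGroup N] [Module K N]

theorem isInternal_map_of_surjective (ℳ : ι → Submodule K M) [Decomposition ℳ] {f : M →ₗ[K] N}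
    (hf : Surjective f) (hker : SetLike.IsHomogeneous ℳ (LinearMap.ker f)) :
    IsInternal fun i => (ℳ i).map f := by
  let F : (⨁ i, ℳ i) →ₗ[K] ⨁ i, (ℳ i).map f := lmap fun i => f.submoduleMap (ℳ i)
  have hF : Surjective F := (lmap_surjective _).2 fun i => f.submoduleMap_surjective (ℳ i)
  have hcomp (m : M) : coeLinearMap (fun i => (ℳ i).map f) (F (decompose ℳ m)) = f m := by
    induction m using Decomposition.inductionOn ℳ with
    | zero => simp only [decompose_zero, map_zero]
    | homogeneous m => simp [F]
    | add m m' hm hm' => simp only [decompose_add, map_add, hm, hm']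
  change Bijective (coeLinearMap fun i => (ℳ i).map f)
  refine ⟨(injective_iff_map_eq_zero _).2 fun y hy => ?_, fun n => ?_⟩
  · obtain ⟨m, rfl⟩ := (hF.comp (decompose ℳ).surjective) y
    have hm : m ∈ LinearMap.ker f := (hcomp m).symm.trans hy
    ext i
    exact hker i hm
  · obtain ⟨m, rfl⟩ := hf n
    exact ⟨_, hcomp m⟩

end GradedQuotient

theorem mapDomain_mem_gradeBy {K A B ι : Type*} [CommSemiring K] {h : A → B} {e : A → ι}
    {d : B → ι} (hd : ∀ a, d (h a) = e a) {i : ι} {x : K[A]} (hx : x ∈ gradeBy K e i) :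
    mapDomain h x ∈ gradeBy K d i := by
  classical
  intro b hb
  obtain ⟨a, ha, rfl⟩ := Finset.mem_image.1 (Finsupp.mapDomain_support hb)
  rw [hd, hx a ha]

section HyperbolaQuotient

variable (K : Type*) [CommRing K]

/-- The ideal `𝔪` of `K[ℚ≥0]` generated by the monomials of positive degree. -/
noncomputable def positiveDegreeIdeal : Ideal K[ℚ≥0] :=
  Ideal.span {x | ∃ α : ℚ≥0, 0 < α ∧ x = single α 1}

/-- The degree `n + α` of the monomial `t ^ n * e_α`, encoded as `single (n, α) 1`. -/
def totalDegree : ℕ × ℚ≥0 →+ ℚ :=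
  (Nat.castAddMonoidHom ℚ).coprod NNRat.coeHom.toAddMonoidHom

/-- The ideal of `K[ℚ≥0][t]` generated by the monomials `t ^ n * e_α` on or above the hyperbola
`n * α = 1`. -/
noncomputable def hyperbolaIdeal : Ideal K[ℕ × ℚ≥0] :=
  Ideal.span (of' K _ '' {p | 1 ≤ p.1 * p.2})

/-- The quotient of `K[ℚ≥0][t]` that serves as the graded `K[ℚ≥0]`-module `N`. -/
abbrev HyperbolaQuotient : Type _ :=
  K[ℕ × ℚ≥0] ⧸ hyperbolaIdeal K

/-- The inclusion of `K[ℚ≥0]` into `K[ℚ≥0][t]` as the constants in `t`. -/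
noncomputable def inrAlgHom : K[ℚ≥0] →ₐ[K] K[ℕ × ℚ≥0] :=
  mapDomainAlgHom K K (AddMonoidHom.inr ℕ ℚ≥0)

noncomputable instance : Module K[ℚ≥0] (HyperbolaQuotient K) :=
  Module.compHom _ (inrAlgHom K).toRingHom

/-- The grading of `HyperbolaQuotient K` induced by `totalDegree`. -/
noncomputable def hyperbolaGrade (q : ℚ) : Submodule K (HyperbolaQuotient K) :=
  (gradeBy K totalDegree q).map (Ideal.Quotient.mkₐ K (hyperbolaIdeal K)).toLinearMap

/-- The map `x ↦ t ^ n * x`. -/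
noncomputable def tPowMul (n : ℕ) : K[ℚ≥0] →ₗ[K[ℚ≥0]] HyperbolaQuotient K :=
  LinearMap.toSpanSingleton _ _ (Ideal.Quotient.mk _ (single (n, 0) 1))

theorem hyperbolaIdeal_isHomogeneous : (hyperbolaIdeal K).IsHomogeneous (gradeBy K totalDegree) :=
  Ideal.homogeneous_span _ _ fun x hx => by
    obtain ⟨p, -, rfl⟩ := hx
    exact ⟨_, single_mem_gradeBy totalDegree p 1⟩

theorem isInternal_hyperbolaGrade : IsInternal (hyperbolaGrade K) := by
  refine isInternal_map_of_surjective _ (Ideal.Quotient.mkₐ_surjective K _) fun i x hx => ?_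
  exact Ideal.Quotient.eq_zero_iff_mem.2
    (hyperbolaIdeal_isHomogeneous K i (Ideal.Quotient.eq_zero_iff_mem.1 hx))

variable {K}

theorem single_mem_hyperbolaIdeal {p : ℕ × ℚ≥0} (hp : 1 ≤ p.1 * p.2) :
    single p 1 ∈ hyperbolaIdeal K :=
  Ideal.subset_span ⟨p, hp, rfl⟩

theorem single_mem_hyperbolaIdeal_iff [Nontrivial K] {p : ℕ × ℚ≥0} :
    single p 1 ∈ hyperbolaIdeal K ↔ 1 ≤ p.1 * p.2 := by
  refine ⟨fun h => ?_, single_mem_hyperbolaIdeal⟩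
  obtain ⟨p', hp', d, rfl⟩ := mem_ideal_span_of'_image.1 h p
    (Finsupp.mem_support_iff.2 (by simp))
  calc (1 : ℚ≥0) ≤ p'.1 * p'.2 := hp'
    _ ≤ (d + p').1 * (d + p').2 := by gcongr <;> simp

theorem smul_mem_hyperbolaGrade {q q' : ℚ} {r : K[ℚ≥0]}
    (hr : r ∈ gradeBy K ((↑) : ℚ≥0 → ℚ) q) {y : HyperbolaQuotient K}
    (hy : y ∈ hyperbolaGrade K q') : r • y ∈ hyperbolaGrade K (q + q') := by
  obtain ⟨b, hb, rfl⟩ := hy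
  have hr' : inrAlgHom K r ∈ gradeBy K totalDegree q :=
    mapDomain_mem_gradeBy (fun α => by simp [totalDegree]) hr
  exact ⟨inrAlgHom K r * b, SetLike.mul_mem_graded hr' hb, rfl⟩

theorem tPowMul_single (n : ℕ) (α : ℚ≥0) :
    tPowMul K n (single α 1) = Ideal.Quotient.mk _ (single (n, α) 1) := by
  have hmul : inrAlgHom K (single α 1) * single (n, 0) 1 = single (n, α) 1 := by
    simp [inrAlgHom, single_mul_single]
  exact congrArg _ hmul

theorem tPowMul_mem_hyperbolaGrade (n : ℕ) {q : ℚ} {x : K[ℚ≥0]}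
    (hx : x ∈ gradeBy K ((↑) : ℚ≥0 → ℚ) q) : tPowMul K n x ∈ hyperbolaGrade K (q + n) := by
  refine smul_mem_hyperbolaGrade hx ⟨_, ?_, rfl⟩
  simpa [totalDegree] using single_mem_gradeBy totalDegree ((n, 0) : ℕ × ℚ≥0) (1 : K)

theorem hasFiniteSupport_tPowMul {x : K[ℚ≥0]} (hx : x ∈ positiveDegreeIdeal K) :
    HasFiniteSupport fun n => tPowMul K n x := by
  change Set.Finite {n | tPowMul K n x ≠ 0}
  rw [← Filter.eventually_cofinite, Nat.cofinite_eq_atTop]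
  induction hx using Submodule.span_induction with
  | mem x hx =>
    obtain ⟨α, hα, rfl⟩ := hx
    filter_upwards [Filter.eventually_ge_atTop ⌈α⁻¹⌉₊] with n hn
    have hnα : 1 ≤ n * α := (inv_le_iff_one_le_mul₀ hα).1 (Nat.ceil_le.1 hn)
    rw [tPowMul_single, Ideal.Quotient.eq_zero_iff_mem]
    exact single_mem_hyperbolaIdeal hnα
  | zero => simp only [map_zero, Filter.eventually_true]
  | add x y _ _ hx hy => filter_upwards [hx, hy] with n hxn hyn; rw [map_add, hxn, hyn, add_zero]
  | smul r x _ hx => filter_upwards [hx] with n hxn; rw [map_smul, hxn, smul_zero]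

theorem exists_tPowMul_single_ne_zero [Nontrivial K] (n : ℕ) :
    ∃ α : ℚ≥0, 0 < α ∧ tPowMul K n (single α 1) ≠ 0 := by
  refine ⟨(n + 1 : ℚ≥0)⁻¹, by positivity, ?_⟩
  rw [tPowMul_single, Ne, Ideal.Quotient.eq_zero_iff_mem, single_mem_hyperbolaIdeal_iff, not_le,
    ← div_eq_mul_inv, div_lt_one (by positivity)]
  exact lt_add_one (n : ℚ≥0)

variable (K) in
/-- Multiplication by `1 / (1 - t) = ∑ n, t ^ n`, which makes sense on the ideal `𝔪`. -/
noncomputable def divOneSubT : positiveDegreeIdeal K →ₗ[K[ℚ≥0]] HyperbolaQuotient K :=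
  locallyFiniteSum (fun n => (tPowMul K n).domRestrict _) fun x => hasFiniteSupport_tPowMul x.2

theorem divOneSubT_not_finite_degree [Nontrivial K] (S : Finset ℚ) :
    ¬ ∀ q : ℚ, ∀ x : positiveDegreeIdeal K, (x : K[ℚ≥0]) ∈ gradeBy K ((↑) : ℚ≥0 → ℚ) q →
      divOneSubT K x ∈ ⨆ s ∈ S, (hyperbolaGrade K (q + s)).toAddSubgroup := by
  have hindep : iSupIndep fun q => (hyperbolaGrade K q).toAddSubgroup :=
    IsInternal.addSubgroup_iSupIndep (isInternal_hyperbolaGrade K)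
  refine locallyFiniteSum_not_finite_degree
    (ℳ := fun q => {x : positiveDegreeIdeal K | (x : K[ℚ≥0]) ∈ gradeBy K ((↑) : ℚ≥0 → ℚ) q})
    hindep Nat.cast_injective (fun x : positiveDegreeIdeal K => hasFiniteSupport_tPowMul x.2)
    (g := fun n => (tPowMul K n).domRestrict (positiveDegreeIdeal K))
    (fun n q x hx => ?_) (fun n => ?_) S
  · exact tPowMul_mem_hyperbolaGrade n hx
  · obtain ⟨α, hα, hne⟩ := exists_tPowMul_single_ne_zero (K := K) n
    exact ⟨α, ⟨single α 1, Ideal.subset_span ⟨α, hα, rfl⟩⟩, single_mem_gradeBy _ α 1, hne⟩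

end HyperbolaQuotient

theorem graded_hom_to_hom_not_surjective_general.{u} (K : Type u) [CommRing K] [Nontrivial K] :
    ∃ (N : Type u) (_ : AddCommGroup N) (_ : Module K[ℚ≥0] N) (𝒩 : ℚ → AddSubgroup N),
      IsInternal 𝒩 ∧
      (∀ q q' : ℚ, ∀ r ∈ gradeBy K ((↑) : ℚ≥0 → ℚ) q, ∀ n ∈ 𝒩 q', r • n ∈ 𝒩 (q + q')) ∧
      ∃ f : positiveDegreeIdeal K →ₗ[K[ℚ≥0]] N,
        ∀ S : Finset ℚ, ¬ ∀ q : ℚ, ∀ x : positiveDegreeIdeal K,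
          (x : K[ℚ≥0]) ∈ gradeBy K ((↑) : ℚ≥0 → ℚ) q → f x ∈ ⨆ s ∈ S, 𝒩 (q + s) :=
  ⟨HyperbolaQuotient K, inferInstance, inferInstance, fun q => (hyperbolaGrade K q).toAddSubgroup,
    isInternal_hyperbolaGrade K, fun _ _ _ hr _ hn => smul_mem_hyperbolaGrade hr hn,
    divOneSubT K, divOneSubT_not_finite_degree⟩

theorem span_single_one_eq_grade {K A : Type*} [CommSemiring K] (a : A) :
    Submodule.span K {single a (1 : K)} = grade K a := by
  ext x
  rw [Submodule.mem_span_singleton, mem_grade_iff']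
  simp only [smul_single, smul_eq_mul, mul_one, LinearMap.mem_range, lsingle_apply]

theorem canonicalGrade_coe (K : Type) [Field K] (α : ℚ≥0) :
    canonicalGrade K α = (grade K α).toAddSubgroup :=
  (dif_pos α.2).trans (congrArg _ (span_single_one_eq_grade α))

theorem canonicalGrade_of_neg (K : Type) [Field K] {q : ℚ} (hq : q < 0) :
    canonicalGrade K q = ⊥ :=
  dif_neg hq.not_ge

theorem canonicalGrade_eq_gradeBy (K : Type) [Field K] (q : ℚ) :
    canonicalGrade K q = (gradeBy K ((↑) : ℚ≥0 → ℚ) q).toAddSubgroup := by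
  rcases le_or_gt 0 q with hq | hq
  · lift q to ℚ≥0 using hq
    rw [canonicalGrade_coe]
    ext x
    exact forall₂_congr fun α _ => NNRat.coe_inj.symm
  · rw [canonicalGrade_of_neg K hq, eq_comm, AddSubgroup.eq_bot_iff_forall]
    intro x hx
    ext α
    by_contra h
    have hα : (α : ℚ) = q := hx α (Finsupp.mem_support_iff.2 h)
    exact (hα ▸ hq).not_ge α.2

/-- For `R = K[ℚ≥0]` with its canonical `ℚ`-grading and `𝔪` the homogeneous ideal
generated by the `e_α` with `α > 0`, there are a `ℚ`-graded `R`-module `N` and an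
`R`-linear map `f : 𝔪 → N` admitting no finite set `S ⊆ ℚ` with
`f(𝔪 ∩ R_q) ⊆ ∑_{s ∈ S} 𝒩 (q + s)` for all `q`; i.e. the canonical monomorphism
`HOM_ℚ(𝔪, N)_[0] → Hom_R(𝔪, N)` is not surjective. -/
theorem graded_hom_to_hom_not_surjective (K : Type) [Field K]
    (𝔪 : Ideal (AddMonoidAlgebra K ℚ≥0))
    (h𝔪 : 𝔪 = Ideal.span
      {x : AddMonoidAlgebra K ℚ≥0 | ∃ α : ℚ≥0, 0 < α ∧ x = AddMonoidAlgebra.single α 1}) :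
    ∃ (N : Type) (_ : AddCommGroup N) (_ : Module (AddMonoidAlgebra K ℚ≥0) N)
      (𝒩 : ℚ → AddSubgroup N),
      DirectSum.IsInternal 𝒩 ∧
      (∀ q q' : ℚ, ∀ r ∈ canonicalGrade K q, ∀ n ∈ 𝒩 q', r • n ∈ 𝒩 (q + q')) ∧
      ∃ f : 𝔪 →ₗ[AddMonoidAlgebra K ℚ≥0] N,
        ∀ S : Finset ℚ, ¬ (∀ q : ℚ, ∀ x : 𝔪, (x : AddMonoidAlgebra K ℚ≥0) ∈ canonicalGrade K q →
          f x ∈ ⨆ s ∈ S, 𝒩 (q + s)) := by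
  subst h𝔪
  simp only [canonicalGrade_eq_gradeBy]
  exact graded_hom_to_hom_not_surjective_general K
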